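/- Let K be a field with the following property: for every irreducible reduced separated finite-type K-scheme W, if W admits a K-point whose image lies in an open subscheme of W that is smooth over K, then the set of images in the topological space of W of the K-points of W is topologically dense in W. Let W be a smooth, irreducible, separated, finite-type K-scheme, let V be a scheme over K, and let f : V ⟶ W be an étale morphism over Spec K such that V admits a K-point. Then the set of images in the topological space of W of the K-points f ∘ x, as x ranges over the K-points of V, is topologically dense in W. -/

import Mathlib

open AlgebraicGeometry CategoryTheory

universe u

namespace LargeAux

open MvPolynomial

lemma idealOfVars_pow_mul {σ R : Type*} [CommRing R] [IsDomain R] (k : ℕ)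
    (p q : MvPolynomial σ R) (h : p * q ∈ idealOfVars σ R ^ (k + k)) :
    p ∈ idealOfVars σ R ^ k ∨ q ∈ idealOfVars σ R ^ k := by
  have key : ∀ (n : ℕ) (p : MvPolynomial σ R), p ∈ idealOfVars σ R ^ n ↔
      (n : ℕ∞) ≤ (p : MvPowerSeries σ R).order := by
    intro n p
    rw [mem_pow_idealOfVars_iff']
    constructor
    · intro h
      exact MvPowerSeries.nat_le_order fun d hd => by simpa using h d hd
    · intro h d hd
      have := MvPowerSeries.coeff_of_lt_order (f := (p : MvPowerSeries σ R)) (d := d)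
        (lt_of_lt_of_le (by exact_mod_cast hd) h)
      simpa using this
  rw [key] at h
  rw [key, key]
  rw [MvPolynomial.coe_mul, MvPowerSeries.order_mul] at h
  by_contra! hc
  have := ENat.add_lt_add hc.1 hc.2
  push_cast at h
  exact absurd (lt_of_lt_of_le this h) (lt_irrefl _)

lemma key {R A : Type*} [CommRing R] [IsDomain R] [CommRing A] [Algebra R A]
    [Algebra.FormallySmooth R A] (ε : A →ₐ[R] R) (a b : A) (h : a * b = 0) (k : ℕ) (hk : k ≠ 0) :
    a ∈ RingHom.ker ε ^ k ∨ b ∈ RingHom.ker ε ^ k := by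
  let σ := RingHom.ker ε
  let φ : MvPolynomial σ R →ₐ[R] A := MvPolynomial.aeval (fun x => (x : A))
  let M := idealOfVars σ R
  have hφ : Function.Surjective φ := by
    intro a
    have ha : a - algebraMap R A (ε a) ∈ RingHom.ker ε := by
      simp [RingHom.mem_ker]
    refine ⟨X ⟨_, ha⟩ + C (ε a), ?_⟩
    simp [φ]
  have hM : M.map φ ≤ RingHom.ker ε := by
    rw [Ideal.map_span, Ideal.span_le]
    rintro _ ⟨_, ⟨x, rfl⟩, rfl⟩
    simp [φ]
  have hM' : ∀ p, φ p ∈ RingHom.ker ε → p ∈ M := by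
    intro p hp
    have h1 : ε.comp φ = MvPolynomial.aeval (fun _ => (0 : R)) := by
      ext x
      have : ε (x : A) = 0 := x.2
      simp [φ, this]
    have h2 : constantCoeff p = 0 := by
      have := congr($h1 p)
      rw [RingHom.mem_ker] at hp
      rw [AlgHom.comp_apply, hp] at this
      rw [← MvPolynomial.eval_zero']
      simpa [MvPolynomial.aeval_eq_eval] using this.symm
    have := (mem_pow_idealOfVars_iff' (σ := σ) (R := R) 1 p).2 (by
      intro x hx
      have : x = 0 := by
        rw [← Finsupp.degree_eq_zero_iff]; omega
      rw [this]; exact h2)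
    simpa using this
  let N := M ^ (k + k)
  have hN : N.map φ ≤ RingHom.ker ε ^ (k + k) := by
    rw [Ideal.map_pow]
    exact Ideal.pow_right_mono hM _
  let g : MvPolynomial σ R ⧸ N →ₐ[R] A ⧸ N.map φ :=
    Ideal.quotientMapₐ (N.map φ) φ Ideal.le_comap_map
  have hg : Function.Surjective g := by
    intro y
    obtain ⟨a, rfl⟩ := Ideal.Quotient.mk_surjective y
    obtain ⟨p, rfl⟩ := hφ a
    exact ⟨Ideal.Quotient.mk N p, rfl⟩
  have hker : RingHom.ker g ≤ M.map (Ideal.Quotient.mk N) := by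
    intro x hx
    obtain ⟨p, rfl⟩ := Ideal.Quotient.mk_surjective x
    refine Ideal.mem_map_of_mem _ (hM' p ?_)
    have : φ p ∈ N.map φ := by
      rw [← Ideal.Quotient.eq_zero_iff_mem]
      exact hx
    exact Ideal.pow_le_self (by omega) (hN this)
  have hnil : IsNilpotent (RingHom.ker g) := by
    refine ⟨k + k, ?_⟩
    have := Ideal.pow_right_mono hker (k + k)
    rw [← Ideal.map_pow] at this
    have h0 : N.map (Ideal.Quotient.mk N) = ⊥ := Ideal.map_quotient_self N
    exact le_bot_iff.1 (this.trans h0.le)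
  let s : A →ₐ[R] MvPolynomial σ R ⧸ N :=
    Algebra.FormallySmooth.liftOfSurjective (Ideal.Quotient.mkₐ R (N.map φ)) g hg hnil
  have hs : ∀ a, g (s a) = Ideal.Quotient.mk _ a :=
    Algebra.FormallySmooth.liftOfSurjective_apply _ g hg hnil
  obtain ⟨p, hp⟩ := Ideal.Quotient.mk_surjective (s a)
  obtain ⟨q, hq⟩ := Ideal.Quotient.mk_surjective (s b)
  have hpq : p * q ∈ N := by
    rw [← Ideal.Quotient.eq_zero_iff_mem, map_mul, hp, hq, ← map_mul, h, map_zero]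
  have fin : ∀ (a : A) (p), Ideal.Quotient.mk N p = s a → p ∈ M ^ k → a ∈ RingHom.ker ε ^ k := by
    intro a p hp hpk
    have h1 : Ideal.Quotient.mk (N.map φ) (φ p) = Ideal.Quotient.mk _ a := by
      rw [← hs a, ← hp]; rfl
    have h2 := Ideal.pow_le_pow_right (by omega : k ≤ k + k) (hN ((Ideal.Quotient.eq).1 h1))
    have h3 : φ p ∈ RingHom.ker ε ^ k := by
      have := Ideal.mem_map_of_mem φ hpk
      rw [Ideal.map_pow] at this
      exact Ideal.pow_right_mono hM _ this
    simpa using sub_mem h3 h2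
  exact (idealOfVars_pow_mul k p q hpq).imp (fin a p hp) (fin b q hq)

lemma key2 {R A : Type*} [CommRing R] [IsDomain R] [CommRing A] [IsNoetherianRing A]
    (φ : R →+* A) (hφ : φ.Smooth) (ε : A →+* R) (hε : ε.comp φ = RingHom.id R)
    (a b : A) (h : a * b = 0) :
    (∃ r : A, ε r = 0 ∧ r * a = a) ∨ (∃ r : A, ε r = 0 ∧ r * b = b) := by
  algebraize [φ]
  let ε' : A →ₐ[R] R := { ε with commutes' := fun r => congr($hε r) }
  have H := key ε' a b h
  have main : ∀ a : A, (∀ n : ℕ, ∃ k ≥ n, a ∈ RingHom.ker ε' ^ k) → ∃ r : A, ε r = 0 ∧ r * a = a := by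
    intro a ha
    have : a ∈ (⨅ i : ℕ, RingHom.ker ε' ^ i • ⊤ : Submodule A A) := by
      rw [Submodule.mem_iInf]
      intro i
      obtain ⟨k, hk, hak⟩ := ha i
      simpa using Ideal.pow_le_pow_right hk hak
    obtain ⟨r, hr⟩ := (Ideal.mem_iInf_smul_pow_eq_bot_iff _ a).1 this
    exact ⟨r, r.2, hr⟩
  by_cases ha : ∀ n : ℕ, ∃ k ≥ n, a ∈ RingHom.ker ε' ^ k
  · exact .inl (main a ha)
  · right
    push Not at ha
    obtain ⟨n, hn⟩ := ha
    refine main b fun m => ⟨m + n + 1, by omega, ?_⟩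
    exact (H (m + n + 1) (by omega)).resolve_left (hn _ (by omega))

lemma domain_of_point {K : Type u} [Field K] (V : Scheme.{u}) (sV : V ⟶ Spec (CommRingCat.of K))
    [Smooth sV] [IsLocallyNoetherian V] (x : Spec (CommRingCat.of K) ⟶ V)
    (hx : x ≫ sV = 𝟙 (Spec (CommRingCat.of K))) (z : Spec (CommRingCat.of K))
    (U : V.Opens) (hU : IsAffineOpen U) (hz : x.base z ∈ U)
    (hinj : Function.Injective (V.presheaf.germ U (x.base z) hz)) : IsDomain Γ(V, U) := by
  have hsub : Subsingleton (Spec (CommRingCat.of K)) :=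
    inferInstanceAs (Subsingleton (PrimeSpectrum K))
  have hle : (⊤ : (Spec (CommRingCat.of K)).Opens) ≤ x ⁻¹ᵁ U := by
    intro y _
    rw [Subsingleton.elim y z]
    exact hz
  have hle' : U ≤ sV ⁻¹ᵁ ⊤ := fun _ _ => trivial
  have hN : IsNoetherianRing Γ(V, U) := IsLocallyNoetherian.component_noetherian ⟨U, hU⟩
  have hdom : IsDomain Γ(Spec (CommRingCat.of K), ⊤) := inferInstance
  let φ := sV.appLE ⊤ U hle'
  let ε := x.appLE U ⊤ hle
  have hφ : φ.hom.Smooth := sV.smooth_appLE (isAffineOpen_top _) hU hle'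
  have hε : ε.hom.comp φ.hom = RingHom.id _ := by
    have : φ ≫ ε = 𝟙 _ := by
      have gen : ∀ (g : Spec (CommRingCat.of K) ⟶ Spec (CommRingCat.of K))
          (hg : g = 𝟙 _) (e : (⊤ : (Spec (CommRingCat.of K)).Opens) ≤ g ⁻¹ᵁ ⊤),
          g.appLE ⊤ ⊤ e = 𝟙 _ := by
        rintro g rfl e
        rw [Scheme.Hom.appLE, Scheme.Hom.id_app]
        exact (Category.id_comp _).trans ((Spec (CommRingCat.of K)).presheaf.map_id _)
      have h1 := Scheme.Hom.appLE_comp_appLE x sV ⊤ U ⊤ hle' hle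
      exact h1.trans (gen _ hx _)
    rw [← CommRingCat.hom_comp, this]
    rfl
  have hzero : ∀ a : Γ(V, U), (∃ r : Γ(V, U), ε.hom r = 0 ∧ r * a = a) → a = 0 := by
    rintro a ⟨r, hr, hra⟩
    have h1 : ε.hom (1 - r) = 1 := by simp [hr]
    have h2 : x.base z ∈ V.basicOpen (1 - r) := by
      have h3 : (Spec (CommRingCat.of K)).basicOpen (ε.hom (1 - r)) ≤
          x ⁻¹ᵁ (V.basicOpen (1 - r)) := by
        have := Scheme.basicOpen_appLE x ⊤ U hle (1 - r)
        rw [show ε.hom (1 - r) = x.appLE U ⊤ hle (1 - r) from rfl, this]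
        exact inf_le_right
      apply h3
      rw [h1]
      simp
    rw [Scheme.mem_basicOpen _ _ _ hz] at h2
    apply hinj
    rw [map_zero]
    refine h2.mul_right_eq_zero.1 ?_
    rw [← map_mul, sub_mul, one_mul, hra, sub_self, map_zero]
  have hnz : NoZeroDivisors Γ(V, U) := ⟨fun {a b} hab =>
    (key2 φ.hom hφ ε.hom hε a b hab).imp (hzero a) (hzero b)⟩
  have hnt : Nontrivial Γ(V, U) := ε.hom.domain_nontrivial
  exact NoZeroDivisors.to_isDomain _

end LargeAux

/-- Lemma 2.5: suppose `K` is large, in Pop's sense that for every irreducible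
reduced separated finite-type `K`-scheme `W`, if `W` has a `K`-point landing in
a `K`-smooth open subscheme, then the `K`-points of `W` are topologically dense.
Then for every smooth irreducible separated finite-type `K`-scheme `W`, every
étale morphism `f : V ⟶ W` over `Spec K` from a `K`-scheme `V` with a `K`-point
has topologically dense image of `K`-points. -/
theorem stmt_15 {K : Type u} [Field K]
    (hlarge : ∀ (W : Scheme.{u}) (sW : W ⟶ Spec (CommRingCat.of K)),
      IrreducibleSpace W → IsReduced W → IsSeparated sW → LocallyOfFiniteType sW →
      QuasiCompact sW →
      (∃ (x : Spec (CommRingCat.of K) ⟶ W) (U : W.Opens),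
        x ≫ sW = 𝟙 (Spec (CommRingCat.of K)) ∧ IsSmooth (U.ι ≫ sW) ∧
        Set.range ⇑x.base ⊆ (U : Set W)) →
      Dense {w : W | ∃ x : Spec (CommRingCat.of K) ⟶ W,
        x ≫ sW = 𝟙 (Spec (CommRingCat.of K)) ∧ ∃ z, x.base z = w})
    (W : Scheme.{u}) (sW : W ⟶ Spec (CommRingCat.of K))
    (hsm : IsSmooth sW) (hirr : IrreducibleSpace W) (hsep : IsSeparated sW)
    (hft : LocallyOfFiniteType sW) (hqc : QuasiCompact sW)
    (V : Scheme.{u}) (sV : V ⟶ Spec (CommRingCat.of K)) (f : V ⟶ W)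
    (hf : f ≫ sW = sV) (het : IsEtale f)
    (hVpt : ∃ x : Spec (CommRingCat.of K) ⟶ V, x ≫ sV = 𝟙 (Spec (CommRingCat.of K))) :
    Dense {w : W | ∃ x : Spec (CommRingCat.of K) ⟶ V,
      x ≫ sV = 𝟙 (Spec (CommRingCat.of K)) ∧ ∃ z, (x ≫ f).base z = w} := by
  have hsm' : Smooth sW := hsm
  have het' : Etale f := het
  have hVs : Smooth sV := by rw [← hf]; infer_instance
  have hVN : IsLocallyNoetherian V := LocallyOfFiniteType.isLocallyNoetherian sV
  obtain ⟨x, hx⟩ := hVpt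
  have hsub : Subsingleton (Spec (CommRingCat.of K)) :=
    inferInstanceAs (Subsingleton (PrimeSpectrum K))
  obtain ⟨z⟩ : Nonempty (Spec (CommRingCat.of K)) :=
    inferInstanceAs (Nonempty (PrimeSpectrum K))
  obtain ⟨U, hz, hU, hinj⟩ := V.exists_germ_injective (x.base z)
  have hdom := LargeAux.domain_of_point V sV x hx z U hU hz hinj
  have hUaff : IsAffine U := hU
  have hUne : Nonempty U := ⟨⟨_, hz⟩⟩
  have hdom' : IsDomain Γ(U, ⊤) :=
    (U.topIso.commRingCatIsoToRingEquiv.toMulEquiv).isDomain _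
  have hint : IsIntegral U := isIntegral_of_isAffine_of_isDomain _
  have hrange : Set.range x.base ⊆ Set.range U.ι.base := by
    rintro _ ⟨y, rfl⟩
    rw [Subsingleton.elim y z]
    exact ⟨⟨_, hz⟩, rfl⟩
  have hD := hlarge U (U.ι ≫ sV) inferInstance inferInstance inferInstance inferInstance
    inferInstance ⟨IsOpenImmersion.lift U.ι x hrange, ⊤, by simp [hx],
      (inferInstance : Smooth _), by simp⟩
  rw [dense_iff_inter_open] at hD ⊢
  intro O hO hOne
  have hopen : IsOpen (Set.range (U.ι ≫ f).base) := (U.ι ≫ f).isOpenMap.isOpen_range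
  obtain ⟨w, hwO, ⟨u, rfl⟩⟩ : (O ∩ Set.range (U.ι ≫ f).base).Nonempty :=
    nonempty_preirreducible_inter hO hopen hOne ⟨_, ⟨⟨_, hz⟩, rfl⟩⟩
  obtain ⟨u', hu', y, hy, z', rfl⟩ := hD ((U.ι ≫ f).base ⁻¹' O)
    (hO.preimage (U.ι ≫ f).continuous) ⟨u, hwO⟩
  refine ⟨_, hu', y ≫ U.ι, by simpa using hy, z', ?_⟩
  simp
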